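/- Let Γ be a completed primitive simple graph whose vertex set is partitioned as V = V₁ ⊔ V₂ ⊔ {a,b,c} with V₁ and V₂ nonempty and with no edge of Γ joining V₁ to V₂ (so that removing the three vertices a, b, c disconnects Γ). Then each of the vertices a, b, c has exactly two neighbours in V₁ and exactly two neighbours in V₂; in particular there are no edges of Γ among a, b, c. Moreover, for i = 1, 2, the graph Γᵢ on the vertex set Vᵢ ∪ {a,b,c} whose edges are the edges of Γ having at least one endpoint in Vᵢ together with the three additional edges ab, bc, ca, is a completed primitive 4-regular graph. -/

import Mathlib

/-!
Write `n_i(t)` for the number of neighbours of `t` in `V_i`. Every edge cut of a 4-regular graph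
is even (`even_cut`), so in a completed primitive graph a cut with at least two vertices on each
side has at least six edges. Neither `V₁` nor `V₂` is a single vertex, as such a vertex would have
degree at most three. Hence at least six edges join each `V_i` to `{a, b, c}` (`six_le`). The
degrees of `a`, `b`, `c` add up to 12, so both counts equal six and `a`, `b`, `c` are pairwise
nonadjacent. The cut of `V₁ ∪ {t}` has `6 - n₁(t) + n₂(t)` edges, so `n₁(t) ≤ n₂(t)` (`nbr_le`);
by symmetry `n₁(t) = n₂(t) = 2`.

For the glued graph on `V₁ ∪ {a, b, c}`, every cut has a side `A` containing at most one of
`a`, `b`, `c`. If `A` contains `t` among these, the two triangle edges at `t` leave `A` in place of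
the two edges of `G` from `t` to `V₂`; all other edges leaving `A` are the same (`row_eq`). So the
cut of `A` is as large as in `G`. The case `A = ∅` of the same comparison gives 4-regularity, and
connectedness follows from 4-regularity and the cut condition (`completedPrimitive_of_cut`).
-/

open scoped Classical

/-- The set of edges of `G` with one endpoint in `A` and the other outside `A`. -/
noncomputable def cutEdges {V : Type*} [Fintype V] (G : SimpleGraph V) (A : Finset V) :
    Finset (Sym2 V) :=
  G.edgeFinset.filter (fun e => ∃ x, x ∈ e ∧ x ∈ A ∧ ∃ y, y ∈ e ∧ y ∉ A)

/-- A finite simple graph is *completed primitive* if it is 4-regular, connected, has at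
least 3 vertices, and every edge cut separating two parts with at least two vertices each
has size strictly greater than 4. -/
def CompletedPrimitive {V : Type*} [Fintype V] (G : SimpleGraph V) : Prop :=
  (∀ v : V, G.degree v = 4) ∧ G.Connected ∧ 3 ≤ Fintype.card V ∧
    ∀ A : Finset V, 2 ≤ A.card → 2 ≤ Aᶜ.card → 4 < (cutEdges G A).card

/-- The graph consisting of the edges of `G` with at least one endpoint in `Vi`, together
with the triangle edges among `a`, `b`, `c`. -/
noncomputable def splitGlue {V : Type*} (G : SimpleGraph V) (Vi : Finset V) (a b c : V) :
    SimpleGraph V :=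
  SimpleGraph.fromRel (fun x y =>
    (G.Adj x y ∧ (x ∈ Vi ∨ y ∈ Vi)) ∨
      ((x = a ∨ x = b ∨ x = c) ∧ (y = a ∨ y = b ∨ y = c)))

open Finset

/-! ### Edge cuts as sums of adjacency indicators -/

/-- The adjacency indicator of `G`, as a natural number. -/
noncomputable def adjInd {V : Type*} (G : SimpleGraph V) (x y : V) : ℕ :=
  if G.Adj x y then 1 else 0

lemma adjInd_comm {V : Type*} (G : SimpleGraph V) (x y : V) : adjInd G x y = adjInd G y x := by
  simp [adjInd, G.adj_comm]

lemma adjInd_self {V : Type*} (G : SimpleGraph V) (x : V) : adjInd G x x = 0 := by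
  simp [adjInd]

lemma card_filter_adj {V : Type*} (G : SimpleGraph V) (x : V) (S : Finset V) :
    #{y ∈ S | G.Adj x y} = ∑ y ∈ S, adjInd G x y := by
  simp only [adjInd, Finset.card_filter]

lemma degree_eq_sum {V : Type*} [Fintype V] (G : SimpleGraph V) (x : V)
    [Fintype (G.neighborSet x)] :
    G.degree x = ∑ y, adjInd G x y := by
  rw [← card_filter_adj, ← G.card_neighborFinset_eq_degree]
  congr 1
  ext y
  simp

lemma card_cutEdges {V : Type*} [Fintype V] (G : SimpleGraph V) (A : Finset V) :
    #(cutEdges G A) = ∑ x ∈ A, ∑ y ∈ Aᶜ, adjInd G x y := by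
  have h1 : ∑ x ∈ A, ∑ y ∈ Aᶜ, adjInd G x y = #{p ∈ A ×ˢ Aᶜ | G.Adj p.1 p.2} := by
    rw [Finset.card_filter, Finset.sum_product]
    rfl
  rw [h1]
  symm
  refine Finset.card_bij (fun p _ => s(p.1, p.2)) ?_ ?_ ?_
  · rintro ⟨x, y⟩ hp
    simp only [mem_filter, mem_product, mem_compl] at hp
    simp only [cutEdges, mem_filter, SimpleGraph.mem_edgeFinset, SimpleGraph.mem_edgeSet]
    exact ⟨hp.2, x, by simp, hp.1.1, y, by simp, hp.1.2⟩
  · rintro ⟨x, y⟩ hp ⟨x', y'⟩ hq hpq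
    simp only [mem_filter, mem_product, mem_compl] at hp hq
    rcases Sym2.eq_iff.1 hpq with ⟨rfl, rfl⟩ | ⟨rfl, rfl⟩
    · rfl
    · exact absurd hp.1.1 hq.1.2
  · intro e he
    simp only [cutEdges, mem_filter, SimpleGraph.mem_edgeFinset] at he
    obtain ⟨he, x, hx, hxA, y, hy, hyA⟩ := he
    have hxy : x ≠ y := fun h => hyA (h ▸ hxA)
    obtain rfl := (Sym2.mem_and_mem_iff hxy).1 ⟨hx, hy⟩
    exact ⟨(x, y), by simpa [hxA, hyA] using he, rfl⟩

/-- A set `A` and its complement have equal cuts. The complement is described by membership, so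
that the lemma does not depend on a choice of decidable equality on `V`. -/
lemma cutEdges_compl {V : Type*} [Fintype V] (G : SimpleGraph V) (A C : Finset V)
    (hC : ∀ x, x ∈ C ↔ x ∉ A) : #(cutEdges G C) = #(cutEdges G A) := by
  obtain rfl : C = Aᶜ := by
    ext x
    rw [hC, mem_compl]
  rw [card_cutEdges, card_cutEdges, compl_compl, Finset.sum_comm]
  simp only [adjInd_comm]

lemma even_sum_adjInd {V : Type*} (G : SimpleGraph V) (A : Finset V) :
    Even (∑ x ∈ A, ∑ y ∈ A, adjInd G x y) := by
  induction A using Finset.induction_on with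
  | empty => simp
  | insert a s ha ih =>
    have h2 : ∑ x ∈ s, adjInd G x a = ∑ y ∈ s, adjInd G a y :=
      Finset.sum_congr rfl fun x _ => adjInd_comm G x a
    simp only [Finset.sum_insert ha, Finset.sum_add_distrib, adjInd_self, h2]
    obtain ⟨k, hk⟩ := ih
    exact ⟨∑ y ∈ s, adjInd G a y + k, by omega⟩

/-- In a 4-regular graph every edge cut is even, being `4 |A|` minus the sum of the degrees
inside `A`. -/
lemma even_cut {V : Type*} [Fintype V] (G : SimpleGraph V) (h : ∀ v, G.degree v = 4)
    (A : Finset V) : Even #(cutEdges G A) := by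
  have h1 : ∑ x ∈ A, ∑ y ∈ A, adjInd G x y + #(cutEdges G A) = #A * 4 := by
    rw [card_cutEdges, ← Finset.sum_add_distrib, ← smul_eq_mul, ← Finset.sum_const]
    refine Finset.sum_congr rfl fun x _ => ?_
    rw [Finset.sum_add_sum_compl, ← degree_eq_sum, h]
  obtain ⟨k, hk⟩ := even_sum_adjInd G A
  rw [Nat.even_iff]
  omega

/-- Connectedness follows from 4-regularity and the cut condition: a connected component
other than the whole graph would have an empty cut, although it and its complement have at
least two vertices each. -/
lemma completedPrimitive_of_cut {V : Type*} [Fintype V] (G : SimpleGraph V)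
    (hd : ∀ v, G.degree v = 4) (h3 : 3 ≤ Fintype.card V)
    (hc : ∀ A C : Finset V, (∀ x, x ∈ C ↔ x ∉ A) → 2 ≤ #A → 2 ≤ #C → 4 < #(cutEdges G A)) :
    CompletedPrimitive G := by
  refine ⟨hd, ?_, h3, fun A => hc A Aᶜ fun _ => mem_compl⟩
  have : Nonempty V := Fintype.card_pos_iff.1 (by omega)
  refine ⟨fun x y => ?_⟩
  by_contra hxy
  have hnb : ∀ v, ∃ w, G.Adj v w := fun v => by
    have : 0 < G.degree v := by rw [hd]; norm_num
    exact (G.degree_pos_iff_exists_adj v).1 this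
  let A : Finset V := {z | G.Reachable x z}
  have hA : 2 ≤ #A := by
    obtain ⟨w, hw⟩ := hnb x
    exact Finset.one_lt_card.2 ⟨x, by simp [A], w, by simpa [A] using hw.reachable, hw.ne⟩
  have hA' : 2 ≤ #Aᶜ := by
    obtain ⟨w, hw⟩ := hnb y
    refine Finset.one_lt_card.2 ⟨y, by simpa [A] using hxy, w, ?_, hw.ne⟩
    simp only [A, mem_compl, mem_filter, mem_univ, true_and]
    exact fun h => hxy (h.trans hw.symm.reachable)
  have h0 : #(cutEdges G A) = 0 := by
    rw [card_cutEdges]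
    refine Finset.sum_eq_zero fun u hu => Finset.sum_eq_zero fun v hv => ?_
    simp only [A, mem_compl, mem_filter, mem_univ, true_and] at hu hv
    simp only [adjInd, ite_eq_right_iff, one_ne_zero, imp_false]
    exact fun h => hv (hu.trans h.reachable)
  have := hc A Aᶜ (fun _ => mem_compl) hA hA'
  omega

/-! ### Cuts of the glued graph -/

lemma cutEdges_induce {V : Type*} [Fintype V] (H : SimpleGraph V) (S : Finset V)
    (B : Finset (↑S : Set V)) :
    #(cutEdges (H.induce (↑S : Set V)) B) =
      ∑ x ∈ B.map (Function.Embedding.subtype _),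
        ∑ y ∈ S \ B.map (Function.Embedding.subtype _), adjInd H x y := by
  rw [card_cutEdges, Finset.sum_map]
  refine Finset.sum_congr rfl fun x _ => ?_
  have : S \ B.map (Function.Embedding.subtype _) = Bᶜ.map (Function.Embedding.subtype _) := by
    ext y
    simp
    grind
  rw [this, Finset.sum_map]
  refine Finset.sum_congr ?_ fun _ _ => rfl
  ext y
  simp only [mem_compl]

lemma degree_induce {V : Type*} [Fintype V] (H : SimpleGraph V) (S : Finset V)
    (v : (↑S : Set V)) [Fintype ((H.induce (↑S : Set V)).neighborSet v)] :
    (H.induce (↑S : Set V)).degree v = ∑ y ∈ S, adjInd H v y := by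
  rw [degree_eq_sum, ← Finset.sum_coe_sort S]
  rfl

lemma splitGlue_adj {V : Type*} (G : SimpleGraph V) (W : Finset V) (a b c x y : V) :
    (splitGlue G W a b c).Adj x y ↔ x ≠ y ∧ ((G.Adj x y ∧ (x ∈ W ∨ y ∈ W)) ∨
      ((x = a ∨ x = b ∨ x = c) ∧ (y = a ∨ y = b ∨ y = c))) := by
  simp only [splitGlue, SimpleGraph.fromRel_adj, G.adj_comm y x]
  tauto

/-- A sum over `V` splits along the partition `V = V₁ ⊔ V₂ ⊔ {a, b, c}`. -/
lemma sum_split {V : Type*} [Fintype V] (V₁ V₂ : Finset V) (a b c : V)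
    (hab : a ≠ b) (hac : a ≠ c) (hbc : b ≠ c)
    (hdisj : Disjoint V₁ V₂)
    (ha1 : a ∉ V₁) (hb1 : b ∉ V₁) (hc1 : c ∉ V₁)
    (ha2 : a ∉ V₂) (hb2 : b ∉ V₂) (hc2 : c ∉ V₂)
    (hcover : ∀ x : V, x ∈ V₁ ∨ x ∈ V₂ ∨ x = a ∨ x = b ∨ x = c) (f : V → ℕ) :
    ∑ x, f x = ∑ x ∈ V₁, f x + ∑ x ∈ V₂, f x + (f a + f b + f c) := by
  have hu : (univ : Finset V) = (V₁ ∪ V₂) ∪ {a, b, c} := by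
    ext x
    have := hcover x
    simp
    tauto
  rw [hu, Finset.sum_union (by simp [*]), Finset.sum_union hdisj]
  simp [Finset.sum_insert, hab, hac, hbc, add_assoc]

/-- The key comparison: a vertex `x` of `V₁ ∪ {a, b, c}` sends as many edges out of `A` in the
glued graph as in `G`, provided `A` contains no vertex of `{a, b, c}` other than `x` when
`x` is one of `a`, `b`, `c`. In that case the two triangle edges at `x` replace the two edges
from `x` to `V₂`. -/
lemma row_eq {V : Type*} [Fintype V] (G : SimpleGraph V)
    (V₁ V₂ : Finset V) (a b c : V)
    (hab : a ≠ b) (hac : a ≠ c) (hbc : b ≠ c)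
    (hdisj : Disjoint V₁ V₂)
    (ha1 : a ∉ V₁) (hb1 : b ∉ V₁) (hc1 : c ∉ V₁)
    (ha2 : a ∉ V₂) (hb2 : b ∉ V₂) (hc2 : c ∉ V₂)
    (hcover : ∀ x : V, x ∈ V₁ ∨ x ∈ V₂ ∨ x = a ∨ x = b ∨ x = c)
    (hsep : ∀ x ∈ V₁, ∀ y ∈ V₂, ¬ G.Adj x y)
    (hn2 : ∀ t : V, (t = a ∨ t = b ∨ t = c) → ∑ y ∈ V₂, adjInd G t y = 2)
    (h3 : ¬ G.Adj a b ∧ ¬ G.Adj b c ∧ ¬ G.Adj a c)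
    (A : Finset V) (hA : A ⊆ V₁ ∪ {a, b, c}) (x : V)
    (hx : x ∈ V₁ ∨ ((x = a ∨ x = b ∨ x = c) ∧
      ∀ y ∈ A, (y = a ∨ y = b ∨ y = c) → y = x)) :
    ∑ y ∈ (V₁ ∪ {a, b, c}) \ A, adjInd (splitGlue G V₁ a b c) x y =
      ∑ y ∈ Aᶜ, adjInd G x y := by
  have hAV : ∀ y ∈ V₂, y ∉ A := fun y hy hyA => by
    have h1 := hA hyA
    have h2 := Finset.disjoint_right.1 hdisj hy
    simp only [mem_union, mem_insert, mem_singleton] at h1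
    grind
  have hL : ∑ y ∈ (V₁ ∪ {a, b, c}) \ A, adjInd (splitGlue G V₁ a b c) x y =
      ∑ y ∈ V₁ ∪ {a, b, c}, if y ∈ A then 0 else adjInd (splitGlue G V₁ a b c) x y := by
    rw [Finset.sdiff_eq_filter, Finset.sum_filter]
    simp only [ite_not]
  have hR : ∑ y ∈ Aᶜ, adjInd G x y = ∑ y, if y ∈ A then 0 else adjInd G x y := by
    rw [Finset.compl_eq_univ_sdiff, Finset.sdiff_eq_filter, Finset.sum_filter]
    simp only [ite_not]
  have hV2 : ∑ y ∈ V₂, (if y ∈ A then 0 else adjInd G x y) = ∑ y ∈ V₂, adjInd G x y :=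
    Finset.sum_congr rfl fun y hy => by rw [if_neg (hAV y hy)]
  have hV1 : ∑ y ∈ V₁, (if y ∈ A then 0 else adjInd (splitGlue G V₁ a b c) x y) =
      ∑ y ∈ V₁, (if y ∈ A then 0 else adjInd G x y) :=
    Finset.sum_congr rfl fun y hy => by
      have : (splitGlue G V₁ a b c).Adj x y ↔ G.Adj x y := by
        rw [splitGlue_adj]
        have := fun h : G.Adj x y => h.ne
        grind
      simp only [adjInd, this]
  rw [hL, hR, sum_split V₁ V₂ a b c hab hac hbc hdisj ha1 hb1 hc1 ha2 hb2 hc2 hcover,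
    Finset.sum_union (by simp [*]), hV1, hV2]
  rw [Finset.sum_insert (by simp [*]), Finset.sum_insert (by simp [*]), Finset.sum_singleton]
  rcases hx with hx | ⟨hx, hxA⟩
  · have h0 : ∑ y ∈ V₂, adjInd G x y = 0 :=
      Finset.sum_eq_zero fun y hy => by simp [adjInd, hsep x hx y hy]
    have hT : ∀ y, y ∉ V₁ → adjInd (splitGlue G V₁ a b c) x y = adjInd G x y := fun y hy => by
      have : (splitGlue G V₁ a b c).Adj x y ↔ G.Adj x y := by
        rw [splitGlue_adj]
        have := fun h : G.Adj x y => h.ne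
        grind
      simp only [adjInd, this]
    rw [h0, hT a ha1, hT b hb1, hT c hc1]
    omega
  · rw [hn2 x hx]
    have hA0 := fun h => hxA a h (by simp)
    have hB0 := fun h => hxA b h (by simp)
    have hC0 := fun h => hxA c h (by simp)
    obtain ⟨h31, h32, h33⟩ := h3
    have h31' : ¬ G.Adj b a := fun h => h31 h.symm
    have h32' : ¬ G.Adj c b := fun h => h32 h.symm
    have h33' : ¬ G.Adj c a := fun h => h33 h.symm
    rcases hx with rfl | rfl | rfl
    · have e1 : b ∉ A := fun h => hab (hB0 h).symm
      have e2 : c ∉ A := fun h => hac (hC0 h).symm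
      simp [adjInd, splitGlue_adj, *]
    · have e1 : a ∉ A := fun h => hab (hA0 h)
      have e2 : c ∉ A := fun h => hbc (hC0 h).symm
      simp [adjInd, splitGlue_adj, *, hab.symm]
    · have e1 : a ∉ A := fun h => hac (hA0 h)
      have e2 : b ∉ A := fun h => hbc (hB0 h)
      simp [adjInd, splitGlue_adj, *, hac.symm, hbc.symm]

lemma glue_completedPrimitive {V : Type*} [Fintype V] (G : SimpleGraph V)
    (h : CompletedPrimitive G)
    (V₁ V₂ : Finset V) (a b c : V)
    (hab : a ≠ b) (hac : a ≠ c) (hbc : b ≠ c)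
    (hdisj : Disjoint V₁ V₂)
    (ha1 : a ∉ V₁) (hb1 : b ∉ V₁) (hc1 : c ∉ V₁)
    (ha2 : a ∉ V₂) (hb2 : b ∉ V₂) (hc2 : c ∉ V₂)
    (hcover : ∀ x : V, x ∈ V₁ ∨ x ∈ V₂ ∨ x = a ∨ x = b ∨ x = c)
    (hsep : ∀ x ∈ V₁, ∀ y ∈ V₂, ¬ G.Adj x y)
    (hn2 : ∀ t : V, (t = a ∨ t = b ∨ t = c) → ∑ y ∈ V₂, adjInd G t y = 2)
    (h3 : ¬ G.Adj a b ∧ ¬ G.Adj b c ∧ ¬ G.Adj a c) :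
    CompletedPrimitive ((splitGlue G V₁ a b c).induce (↑(V₁ ∪ {a, b, c}) : Set V)) := by
  have hrow := row_eq G V₁ V₂ a b c hab hac hbc hdisj ha1 hb1 hc1 ha2 hb2 hc2 hcover hsep hn2 h3
  refine completedPrimitive_of_cut _ ?_ ?_ ?_
  · intro v
    have hv := v.2
    simp only [coe_union, Set.mem_union, mem_coe, mem_insert, mem_singleton] at hv
    have := hrow ∅ (by simp) v (by simpa using hv)
    rw [degree_induce]
    rw [Finset.sdiff_empty, Finset.compl_empty, ← degree_eq_sum, h.1] at this
    exact this
  · have h1 : #({a, b, c} : Finset V) = 3 := Finset.card_eq_three.2 ⟨a, b, c, hab, hac, hbc, rfl⟩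
    have h2 : #({a, b, c} : Finset V) ≤ #(V₁ ∪ {a, b, c}) :=
      Finset.card_le_card Finset.subset_union_right
    have h4 : Fintype.card (↑(V₁ ∪ {a, b, c}) : Set V) = #(V₁ ∪ {a, b, c}) := by
      simp only [Fintype.card_coe, Finset.coe_sort_coe]
    omega
  · have key : ∀ B B' : Finset (↑(V₁ ∪ {a, b, c}) : Set V), (∀ x, x ∈ B' ↔ x ∉ B) →
        2 ≤ #B → 2 ≤ #B' →
        (∀ x ∈ B, ∀ y ∈ B, ((x : V) = a ∨ (x : V) = b ∨ (x : V) = c) →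
          ((y : V) = a ∨ (y : V) = b ∨ (y : V) = c) → y = x) →
        4 < #(cutEdges ((splitGlue G V₁ a b c).induce (↑(V₁ ∪ {a, b, c}) : Set V)) B) := by
      intro B B' hBB hB hB' hT
      set A : Finset V := B.map (Function.Embedding.subtype _) with hAdef
      have hmem : ∀ x, x ∈ A ↔ ∃ y ∈ B, (y : V) = x := fun x => by
        simp only [hAdef, mem_map, Function.Embedding.subtype_apply]
      have hAS : A ⊆ V₁ ∪ {a, b, c} := fun x hx => by
        obtain ⟨y, -, rfl⟩ := (hmem x).1 hx
        exact y.2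
      -- with at most one of `a`, `b`, `c` inside, the cuts in the two graphs have equal size
      have hcut : #(cutEdges ((splitGlue G V₁ a b c).induce (↑(V₁ ∪ {a, b, c}) : Set V)) B) =
          #(cutEdges G A) := by
        rw [cutEdges_induce, card_cutEdges]
        refine Finset.sum_congr rfl fun x hx => hrow A hAS x ?_
        have h1 := hAS hx
        simp only [mem_union, mem_insert, mem_singleton] at h1
        refine h1.imp_right fun h1 => ⟨h1, fun y hy hyT => ?_⟩
        obtain ⟨x', hx', rfl⟩ := (hmem x).1 hx
        obtain ⟨y', hy', rfl⟩ := (hmem y).1 hy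
        exact congrArg _ (hT x' hx' y' hy' h1 hyT)
      rw [hcut]
      refine h.2.2.2 A (by rwa [hAdef, Finset.card_map]) ?_
      calc 2 ≤ #B' := hB'
        _ = #(B'.map (Function.Embedding.subtype _)) := (Finset.card_map _).symm
        _ ≤ #Aᶜ := Finset.card_le_card fun x hx => by
          obtain ⟨y, hy, rfl⟩ := Finset.mem_map.1 hx
          rw [mem_compl, hmem]
          rintro ⟨z, hz, hzy⟩
          rw [hBB] at hy
          exact hy (Subtype.ext hzy ▸ hz)
    intro B C hC hB hB'
    by_cases hT : ∀ x ∈ B, ∀ y ∈ B, ((x : V) = a ∨ (x : V) = b ∨ (x : V) = c) →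
          ((y : V) = a ∨ (y : V) = b ∨ (y : V) = c) → y = x
    · exact key B C hC hB hB' hT
    · rw [← cutEdges_compl _ B C hC]
      refine key C B (fun x => by rw [hC, not_not]) hB' hB ?_
      push Not at hT
      obtain ⟨x, hx, y, hy, hxT, hyT, hxy⟩ := hT
      intro z hz w hw hzT hwT
      rw [hC] at hz hw
      have e1 : (y : V) ≠ x := fun h => hxy (Subtype.ext h)
      have e2 : (z : V) ≠ x := fun h => hz (Subtype.ext h ▸ hx)
      have e3 : (z : V) ≠ y := fun h => hz (Subtype.ext h ▸ hy)
      have e4 : (w : V) ≠ x := fun h => hw (Subtype.ext h ▸ hx)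
      have e5 : (w : V) ≠ y := fun h => hw (Subtype.ext h ▸ hy)
      apply Subtype.ext
      clear hrow key
      grind

/-! ### Neighbours of the separating vertices -/

/-- At least six edges join `V₁` to `{a, b, c}`: a single vertex cannot have its four
neighbours among `a`, `b`, `c`, so `V₁` has at least two vertices, and its cut is even and
larger than four. -/
lemma six_le {V : Type*} [Fintype V] (G : SimpleGraph V)
    (h : CompletedPrimitive G)
    (V₁ V₂ : Finset V) (a b c : V)
    (hab : a ≠ b) (hac : a ≠ c) (hbc : b ≠ c)
    (hdisj : Disjoint V₁ V₂)
    (ha1 : a ∉ V₁) (hb1 : b ∉ V₁) (hc1 : c ∉ V₁)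
    (ha2 : a ∉ V₂) (hb2 : b ∉ V₂) (hc2 : c ∉ V₂)
    (hcover : ∀ x : V, x ∈ V₁ ∨ x ∈ V₂ ∨ x = a ∨ x = b ∨ x = c)
    (h1ne : V₁.Nonempty)
    (hsep : ∀ x ∈ V₁, ∀ y ∈ V₂, ¬ G.Adj x y) :
    6 ≤ ∑ y ∈ V₁, adjInd G a y + ∑ y ∈ V₁, adjInd G b y + ∑ y ∈ V₁, adjInd G c y := by
  have hz : ∀ x ∈ V₁, ∑ y ∈ V₂, adjInd G x y = 0 := fun x hx =>
    Finset.sum_eq_zero fun y hy => by simp [adjInd, hsep x hx y hy]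
  have hle : ∀ x y, adjInd G x y ≤ 1 := fun x y => by
    unfold adjInd
    split_ifs <;> simp
  have hcard : 2 ≤ #V₁ := by
    by_contra hlt
    have h1 : #V₁ = 1 := by
      have := h1ne.card_pos
      omega
    obtain ⟨v, rfl⟩ := Finset.card_eq_one.1 h1
    have hd := h.1 v
    rw [degree_eq_sum,
      sum_split {v} V₂ a b c hab hac hbc hdisj ha1 hb1 hc1 ha2 hb2 hc2 hcover,
      hz v (by simp), Finset.sum_singleton, adjInd_self] at hd
    have := hle v a
    have := hle v b
    have := hle v c
    omega
  have hcompl : V₁ᶜ = V₂ ∪ {a, b, c} := by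
    ext x
    have := hcover x
    have hd' := @Finset.disjoint_left _ V₁ V₂ |>.1 hdisj
    simp only [mem_compl, mem_union, mem_insert, mem_singleton]
    grind
  have hcard' : 2 ≤ #V₁ᶜ :=
    Finset.one_lt_card.2 ⟨a, by simpa using ha1, b, by simpa using hb1, hab⟩
  have hcut := h.2.2.2 V₁ hcard hcard'
  have heven := Nat.even_iff.1 (even_cut G h.1 V₁)
  have heq : #(cutEdges G V₁) =
      ∑ y ∈ V₁, adjInd G a y + ∑ y ∈ V₁, adjInd G b y + ∑ y ∈ V₁, adjInd G c y := by
    rw [card_cutEdges, hcompl, ← Finset.sum_add_distrib, ← Finset.sum_add_distrib]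
    refine Finset.sum_congr rfl fun x hx => ?_
    rw [Finset.sum_union (by simp [*]), hz x hx, Finset.sum_insert (by simp [*]),
      Finset.sum_insert (by simp [*]), Finset.sum_singleton, adjInd_comm G x a,
      adjInd_comm G x b, adjInd_comm G x c]
    omega
  omega

/-- If six edges join `V₁` to `{t, u, v}` and `t` is adjacent to neither `u` nor `v`, then the cut
of `V₁ ∪ {t}` shows that `t` has at least as many neighbours in `V₂` as in `V₁`. -/
lemma nbr_le {V : Type*} [Fintype V] (G : SimpleGraph V)
    (h : CompletedPrimitive G) (V₁ V₂ : Finset V) (t u v : V) (huv : u ≠ v)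
    (hu2 : u ∉ V₂) (hv2 : v ∉ V₂) (ht1 : t ∉ V₁) (h1ne : V₁.Nonempty)
    (hcompl : (insert t V₁)ᶜ = V₂ ∪ {u, v})
    (hsep : ∀ x ∈ V₁, ∀ y ∈ V₂, ¬ G.Adj x y)
    (h6 : ∑ y ∈ V₁, adjInd G t y + ∑ y ∈ V₁, adjInd G u y + ∑ y ∈ V₁, adjInd G v y = 6)
    (htu : adjInd G t u = 0) (htv : adjInd G t v = 0) :
    ∑ y ∈ V₁, adjInd G t y ≤ ∑ y ∈ V₂, adjInd G t y := by
  have hcard : 2 ≤ #(insert t V₁) := by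
    rw [Finset.card_insert_of_notMem ht1]
    have := h1ne.card_pos
    omega
  have hcard' : 2 ≤ #(insert t V₁)ᶜ := by
    rw [hcompl]
    exact Finset.one_lt_card.2 ⟨u, by simp, v, by simp, huv⟩
  have hcut := h.2.2.2 _ hcard hcard'
  have heven := Nat.even_iff.1 (even_cut G h.1 (insert t V₁))
  have hrow : ∀ x, ∑ y ∈ V₂ ∪ {u, v}, adjInd G x y =
      ∑ y ∈ V₂, adjInd G x y + (adjInd G u x + adjInd G v x) := fun x => by
    rw [Finset.sum_union (by simp [*]), Finset.sum_insert (by simp [*]), Finset.sum_singleton,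
      adjInd_comm G x u, adjInd_comm G x v]
  have heq : #(cutEdges G (insert t V₁)) =
      ∑ y ∈ V₂, adjInd G t y + (∑ y ∈ V₁, adjInd G u y + ∑ y ∈ V₁, adjInd G v y) := by
    rw [card_cutEdges, hcompl, Finset.sum_insert ht1, hrow, adjInd_comm G u t, adjInd_comm G v t,
      htu, htv, ← Finset.sum_add_distrib]
    congr 1
    refine Finset.sum_congr rfl fun x hx => ?_
    have hz : ∑ y ∈ V₂, adjInd G x y = 0 :=
      Finset.sum_eq_zero fun y hy => by simp [adjInd, hsep x hx y hy]
    rw [hrow, hz, zero_add]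
  omega

/-- If a completed primitive graph `Γ` has its vertex set partitioned as
`V = V₁ ⊔ V₂ ⊔ {a,b,c}` with `V₁, V₂` nonempty and no edge joining `V₁` to `V₂`, then each
of `a`, `b`, `c` has exactly two neighbours in `V₁` and two in `V₂`, there are no edges
among `a`, `b`, `c`, and each side, completed by the triangle `abc`, is a completed
primitive 4-regular graph. -/
theorem vertex_connectivity_three_split {V : Type*} [Fintype V] (G : SimpleGraph V)
    (h : CompletedPrimitive G)
    (V₁ V₂ : Finset V) (a b c : V)
    (hab : a ≠ b) (hac : a ≠ c) (hbc : b ≠ c)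
    (hdisj : Disjoint V₁ V₂)
    (ha1 : a ∉ V₁) (hb1 : b ∉ V₁) (hc1 : c ∉ V₁)
    (ha2 : a ∉ V₂) (hb2 : b ∉ V₂) (hc2 : c ∉ V₂)
    (hcover : ∀ x : V, x ∈ V₁ ∨ x ∈ V₂ ∨ x = a ∨ x = b ∨ x = c)
    (h1ne : V₁.Nonempty) (h2ne : V₂.Nonempty)
    (hsep : ∀ x ∈ V₁, ∀ y ∈ V₂, ¬ G.Adj x y) :
    (∀ t : V, (t = a ∨ t = b ∨ t = c) →
        (V₁.filter (fun x => G.Adj t x)).card = 2 ∧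
        (V₂.filter (fun x => G.Adj t x)).card = 2) ∧
    (¬ G.Adj a b ∧ ¬ G.Adj b c ∧ ¬ G.Adj a c) ∧
    CompletedPrimitive ((splitGlue G V₁ a b c).induce (↑(V₁ ∪ {a, b, c}) : Set V)) ∧
    CompletedPrimitive ((splitGlue G V₂ a b c).induce (↑(V₂ ∪ {a, b, c}) : Set V)) := by
  have hcover' : ∀ x : V, x ∈ V₂ ∨ x ∈ V₁ ∨ x = a ∨ x = b ∨ x = c := fun x => by
    have := hcover x
    tauto
  have hsep' : ∀ x ∈ V₂, ∀ y ∈ V₁, ¬ G.Adj x y := fun x hx y hy hxy => hsep y hy x hx hxy.symm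
  have h61 := six_le G h V₁ V₂ a b c hab hac hbc hdisj ha1 hb1 hc1 ha2 hb2 hc2 hcover h1ne hsep
  have h62 := six_le G h V₂ V₁ a b c hab hac hbc hdisj.symm ha2 hb2 hc2 ha1 hb1 hc1 hcover' h2ne
    hsep'
  have hdeg : ∀ t, ∑ y ∈ V₁, adjInd G t y + ∑ y ∈ V₂, adjInd G t y +
      (adjInd G t a + adjInd G t b + adjInd G t c) = 4 := fun t => by
    rw [← sum_split V₁ V₂ a b c hab hac hbc hdisj ha1 hb1 hc1 ha2 hb2 hc2 hcover, ← degree_eq_sum,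
      h.1]
  have hda := hdeg a
  have hdb := hdeg b
  have hdc := hdeg c
  rw [adjInd_self] at hda hdb hdc
  rw [adjInd_comm G b a] at hdb
  rw [adjInd_comm G c a, adjInd_comm G c b] at hdc
  have zab : adjInd G a b = 0 := by omega
  have zac : adjInd G a c = 0 := by omega
  have zbc : adjInd G b c = 0 := by omega
  have zba := (adjInd_comm G b a).trans zab
  have zca := (adjInd_comm G c a).trans zac
  have zcb := (adjInd_comm G c b).trans zbc
  have hd' := @Finset.disjoint_left _ V₁ V₂ |>.1 hdisj
  have a1 := nbr_le G h V₁ V₂ a b c hbc hb2 hc2 ha1 h1ne (by ext x; simp; grind) hsep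
    (by omega) zab zac
  have b1 := nbr_le G h V₁ V₂ b a c hac ha2 hc2 hb1 h1ne (by ext x; simp; grind) hsep
    (by omega) zba zbc
  have c1 := nbr_le G h V₁ V₂ c a b hab ha2 hb2 hc1 h1ne (by ext x; simp; grind) hsep
    (by omega) zca zcb
  have a2 := nbr_le G h V₂ V₁ a b c hbc hb1 hc1 ha2 h2ne (by ext x; simp; grind) hsep'
    (by omega) zab zac
  have b2 := nbr_le G h V₂ V₁ b a c hac ha1 hc1 hb2 h2ne (by ext x; simp; grind) hsep'
    (by omega) zba zbc
  have c2 := nbr_le G h V₂ V₁ c a b hab ha1 hb1 hc2 h2ne (by ext x; simp; grind) hsep'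
    (by omega) zca zcb
  have hn1 : ∀ t : V, (t = a ∨ t = b ∨ t = c) → ∑ y ∈ V₁, adjInd G t y = 2 := by
    rintro t (rfl | rfl | rfl) <;> omega
  have hn2 : ∀ t : V, (t = a ∨ t = b ∨ t = c) → ∑ y ∈ V₂, adjInd G t y = 2 := by
    rintro t (rfl | rfl | rfl) <;> omega
  have h3 : ¬ G.Adj a b ∧ ¬ G.Adj b c ∧ ¬ G.Adj a c := by
    simpa [adjInd] using And.intro zab (And.intro zbc zac)
  refine ⟨fun t ht => ?_, h3, ?_, ?_⟩
  · rw [card_filter_adj, card_filter_adj]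
    exact ⟨hn1 t ht, hn2 t ht⟩
  · exact glue_completedPrimitive G h V₁ V₂ a b c hab hac hbc hdisj ha1 hb1 hc1 ha2 hb2 hc2
      hcover hsep hn2 h3
  · exact glue_completedPrimitive G h V₂ V₁ a b c hab hac hbc hdisj.symm ha2 hb2 hc2 ha1 hb1 hc1
      hcover' hsep' hn1 h3
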